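/- arXiv:math/0411575 — 2 statements merged into one kernel-verified Lean document; each statement's English description precedes it below -/
import Mathlib

section
/- Let (W,S) be a right-angled Coxeter system (all off-diagonal Coxeter matrix entries are 2 or ∞). The map sending the singleton {s} to the image of s in the abelianization W^ab extends to an 𝔽₂-linear isomorphism π_S from the space [S] of finite subsets of S (under symmetric difference) onto W^ab; moreover π_S maps the set of finite commutative subsets of S onto the image in W^ab of the set of elements of finite order of W. -/
namespace RACG

open Multiplicative

variable {B : Type*} {W : Type*} [Group W] {M : CoxeterMatrix B}

theorem lift_ok (f : B → Multiplicative (B →₀ ZMod 2))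
    (hf : ∀ i, f i * f i = 1)
    (hra : ∀ s t : B, s ≠ t → M s t = 2 ∨ M s t = 0) : M.IsLiftable f := by
  intro i j
  by_cases h : i = j
  · subst h; simp [hf]
  · rcases hra i j h with h | h
    · rw [h, mul_pow, pow_two, pow_two, hf, hf, one_mul]
    · rw [h, pow_zero]

theorem two_zero (a : B →₀ ZMod 2) : a + a = 0 := by
  ext i; simp [CharTwo.add_self_eq_zero]

/-- The map from `W` to finite subsets, recording parities of letters. -/
noncomputable def par (cs : CoxeterSystem M W)
    (hra : ∀ s t : B, s ≠ t → M s t = 2 ∨ M s t = 0) :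
    W →* Multiplicative (B →₀ ZMod 2) :=
  cs.lift ⟨fun i => ofAdd (Finsupp.single i 1),
    lift_ok _ (fun i => by rw [← ofAdd_add, two_zero, ofAdd_zero]) hra⟩

theorem par_simple (cs : CoxeterSystem M W)
    (hra : ∀ s t : B, s ≠ t → M s t = 2 ∨ M s t = 0) (i : B) :
    par cs hra (cs.simple i) = ofAdd (Finsupp.single i 1) :=
  cs.lift_apply_simple _ i

/-- The inverse map. -/
noncomputable def back (cs : CoxeterSystem M W) :
    (B →₀ ZMod 2) →+ Additive (Abelianization W) :=
  Finsupp.liftAddHom (fun i => ZMod.lift 2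
    ⟨zmultiplesHom _ (Additive.ofMul (Abelianization.of (cs.simple i))), by
      rw [zmultiplesHom_apply, ← ofMul_zpow, ← map_zpow]
      have : cs.simple i ^ ((2 : ℕ) : ℤ) = 1 := by
        rw [zpow_natCast, cs.simple_sq]
      rw [this]; simp⟩)

theorem back_single (cs : CoxeterSystem M W) (i : B) :
    back cs (Finsupp.single i 1) = Additive.ofMul (Abelianization.of (cs.simple i)) := by
  rw [back, Finsupp.liftAddHom_apply_single]
  have := ZMod.lift_coe 2 ⟨zmultiplesHom _ (Additive.ofMul (Abelianization.of (cs.simple i))), by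
      rw [zmultiplesHom_apply, ← ofMul_zpow, ← map_zpow]
      have : cs.simple i ^ ((2 : ℕ) : ℤ) = 1 := by
        rw [zpow_natCast, cs.simple_sq]
      rw [this]; simp⟩ 1
  simpa using this

theorem hom_ext_fin {G : Type*} [AddMonoid G] {f g : (B →₀ ZMod 2) →+ G}
    (h : ∀ i, f (Finsupp.single i 1) = g (Finsupp.single i 1)) : f = g := by
  refine Finsupp.addHom_ext fun i y => ?_
  have : y = 0 ∨ y = 1 := by revert y; decide
  rcases this with rfl | rfl
  · simp
  · exact h i

noncomputable def equiv (cs : CoxeterSystem M W)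
    (hra : ∀ s t : B, s ≠ t → M s t = 2 ∨ M s t = 0) :
    Multiplicative (B →₀ ZMod 2) ≃* Abelianization W :=
  MonoidHom.toMulEquiv (AddMonoidHom.toMultiplicativeLeft (back cs)) (Abelianization.lift (par cs hra))
    (by
      have : AddMonoidHom.toMultiplicative.symm ((Abelianization.lift (par cs hra)).comp
          (AddMonoidHom.toMultiplicativeLeft (back cs))) = AddMonoidHom.id _ := by
        apply hom_ext_fin
        intro i
        change toAdd (Abelianization.lift (par cs hra) (Additive.toMul (back cs (Finsupp.single i 1)))) = _
        rw [back_single]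
        simp [par_simple]
      exact AddMonoidHom.toMultiplicative.symm.injective this)
    (by
      apply Abelianization.hom_ext
      apply cs.ext_simple
      intro i
      change Additive.toMul (back cs (toAdd (Abelianization.lift (par cs hra) (Abelianization.of (cs.simple i))))) = _
      rw [Abelianization.lift_apply_of, par_simple, toAdd_ofAdd, back_single]
      rfl)

theorem equiv_single (cs : CoxeterSystem M W)
    (hra : ∀ s t : B, s ≠ t → M s t = 2 ∨ M s t = 0) (i : B) :
    equiv cs hra (ofAdd (Finsupp.single i 1)) = Abelianization.of (cs.simple i) := by
  change Additive.toMul (back cs _) = _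
  erw [back_single]
  rfl

theorem equiv_symm_of (cs : CoxeterSystem M W)
    (hra : ∀ s t : B, s ≠ t → M s t = 2 ∨ M s t = 0) (w : W) :
    (equiv cs hra).symm (Abelianization.of w) = par cs hra w :=
  Abelianization.lift_apply_of (par cs hra) w

open Classical in
/-- Images of the generators under the retraction to an infinite dihedral group. -/
noncomputable def dihGen (s t : B) (i : B) : DihedralGroup 0 :=
  if i = s then .sr 0 else if i = t then .sr 1 else 1

theorem dih_ok (s t : B) (hst : M s t = 0)
    (hra : ∀ s t : B, s ≠ t → M s t = 2 ∨ M s t = 0) :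
    M.IsLiftable (dihGen s t) := by
  intro i j
  have hts : M t s = 0 := by rw [M.symmetric, hst]
  have sq : ∀ i, dihGen s t i * dihGen s t i = 1 := by
    intro i; unfold dihGen; split_ifs <;> simp
  by_cases h : i = j
  · subst h; simp [sq]
  · rcases hra i j h with h2 | h2
    · rw [h2]
      have key : dihGen s t i = 1 ∨ dihGen s t j = 1 := by
        unfold dihGen
        by_cases h1 : i = s <;> by_cases h3 : i = t <;> by_cases h4 : j = s <;>
          by_cases h5 : j = t <;> simp_all
      rcases key with k | k <;> rw [k] <;> simp [pow_two, sq]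
    · rw [h2, pow_zero]

noncomputable def dih (cs : CoxeterSystem M W) (s t : B) (hst : M s t = 0)
    (hra : ∀ s t : B, s ≠ t → M s t = 2 ∨ M s t = 0) : W →* DihedralGroup 0 :=
  cs.lift ⟨dihGen s t, dih_ok s t hst hra⟩

/-- Reduction mod two. -/
def red : ZMod 0 →+* ZMod 2 := ZMod.castHom (dvd_zero 2) (ZMod 2)

/-- Parity data of an element of the infinite dihedral group. -/
def inv : DihedralGroup 0 → ZMod 2 × ZMod 2
  | .r i => (red i, red i)
  | .sr i => (red i + 1, red i)

theorem inv_sr0 (g : DihedralGroup 0) : inv (.sr 0 * g) = (1, 0) + inv g := by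
  rcases g with i | i
  · rw [DihedralGroup.sr_mul_r, zero_add]; simp [inv, add_comm]
  · rw [DihedralGroup.sr_mul_sr, sub_zero]
    simp only [inv]
    generalize red i = a
    revert a; decide

theorem inv_sr1 (g : DihedralGroup 0) : inv (.sr 1 * g) = (0, 1) + inv g := by
  rcases g with i | i
  · rw [DihedralGroup.sr_mul_r]
    simp only [inv, map_add, map_one]
    generalize red i = a
    revert a; decide
  · rw [DihedralGroup.sr_mul_sr]
    simp only [inv, map_sub, map_one]
    generalize red i = a
    revert a; decide

theorem inv_dih (cs : CoxeterSystem M W) (s t : B) (hst : M s t = 0)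
    (hra : ∀ s t : B, s ≠ t → M s t = 2 ∨ M s t = 0) (w : W) :
    inv (dih cs s t hst hra w) =
      ((par cs hra w).toAdd s, (par cs hra w).toAdd t) := by
  have hne : s ≠ t := by rintro rfl; simp at hst
  induction w using cs.simple_induction_left with
  | one => simp only [map_one]; rw [DihedralGroup.one_def]; simp [inv, -DihedralGroup.r_zero]
  | mul_simple_left w i ih =>
    rw [map_mul, map_mul, par_simple, toAdd_mul, Finsupp.add_apply, Finsupp.add_apply,
      ← Prod.mk_add_mk, ← ih, toAdd_ofAdd]
    have h : dih cs s t hst hra (cs.simple i) = dihGen s t i := cs.lift_apply_simple _ i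
    rw [h]
    unfold dihGen
    split_ifs with h1 h2
    · subst h1; rw [inv_sr0]; simp [hne]
    · subst h2; rw [inv_sr1]; simp [hne.symm]
    · simp [Finsupp.single_apply, h1, h2]

theorem finOrder_dih (g : DihedralGroup 0) (h : IsOfFinOrder g) : inv g ≠ (1, 1) := by
  rcases g with i | i
  · obtain ⟨n, hn, h⟩ := isOfFinOrder_iff_pow_eq_one.1 h
    rw [DihedralGroup.r_pow, DihedralGroup.one_def] at h
    injection h with h
    have h0 : i = 0 := by
      rcases mul_eq_zero.1 (show (show ℤ from i) * (show ℤ from (n : ZMod 0)) = 0 from h) with h | h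
      · exact h
      · have h' : ((n : ℤ)) = 0 := h
        omega
    subst h0
    simp [inv, -DihedralGroup.r_zero]
  · simp only [inv, ne_eq, Prod.mk.injEq, not_and]
    generalize red i = a
    revert a; decide

theorem commute_of_two (cs : CoxeterSystem M W) (x y : B) (h : M x y = 2) :
    Commute (cs.simple x) (cs.simple y) := by
  have h1 := cs.simple_mul_simple_pow x y
  rw [h, pow_two, mul_eq_one_iff_eq_inv, mul_inv_rev, cs.inv_simple, cs.inv_simple] at h1
  exact h1

theorem exists_lift (cs : CoxeterSystem M W) (X : Finset B)
    (hX : ∀ x ∈ X, ∀ y ∈ X, Commute (cs.simple x) (cs.simple y)) :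
    ∃ w : W, w * w = 1 ∧ (∀ z, (∀ x ∈ X, Commute z (cs.simple x)) → Commute z w) ∧
      Abelianization.of w = ∏ x ∈ X, Abelianization.of (cs.simple x) := by
  classical
  induction X using Finset.induction_on with
  | empty => exact ⟨1, by simp, by simp, by simp⟩
  | insert a X ha ih =>
    obtain ⟨w, h1, h2, h3⟩ := ih (fun x hx y hy =>
      hX x (Finset.mem_insert_of_mem hx) y (Finset.mem_insert_of_mem hy))
    have hc : Commute (cs.simple a) w := h2 _ (fun x hx =>
      hX a (Finset.mem_insert_self _ _) x (Finset.mem_insert_of_mem hx))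
    refine ⟨cs.simple a * w, ?_, ?_, ?_⟩
    · rw [← pow_two, hc.mul_pow, pow_two, pow_two, h1, cs.simple_mul_simple_self, one_mul]
    · intro z hz
      exact (hz a (Finset.mem_insert_self _ _)).mul_right
        (h2 z fun x hx => hz x (Finset.mem_insert_of_mem hx))
    · rw [map_mul, h3, Finset.prod_insert ha]

theorem equiv_eq_prod (cs : CoxeterSystem M W)
    (hra : ∀ s t : B, s ≠ t → M s t = 2 ∨ M s t = 0) (v : Multiplicative (B →₀ ZMod 2)) :
    equiv cs hra v = ∏ x ∈ v.toAdd.support, Abelianization.of (cs.simple x) := by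
  have hv : v = ∏ x ∈ v.toAdd.support, ofAdd (Finsupp.single x (1 : ZMod 2)) := by
    rw [← ofAdd_sum]
    conv_lhs => rw [← ofAdd_toAdd v, ← Finsupp.sum_single v.toAdd]
    congr 1
    refine Finset.sum_congr rfl fun x hx => ?_
    have : ∀ a : ZMod 2, a ≠ 0 → a = 1 := by decide
    rw [this _ (Finsupp.mem_support_iff.1 hx)]
  conv_lhs => rw [hv]
  rw [map_prod]
  exact Finset.prod_congr rfl fun x _ => equiv_single cs hra x

end RACG

theorem stmt_17 {B : Type*} {W : Type*} [Group W] (M : CoxeterMatrix B)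
    (cs : CoxeterSystem M W)
    (hra : ∀ s t : B, s ≠ t → M s t = 2 ∨ M s t = 0) :
    ∃ π : Multiplicative (B →₀ ZMod 2) ≃* Abelianization W,
      (∀ s : B, π (Multiplicative.ofAdd (Finsupp.single s 1)) =
        Abelianization.of (cs.simple s)) ∧
      ⇑π '' {v : Multiplicative (B →₀ ZMod 2) |
          ∀ x ∈ (Multiplicative.toAdd v).support, ∀ y ∈ (Multiplicative.toAdd v).support,
            Commute (cs.simple x) (cs.simple y)} =
        Abelianization.of '' {w : W | IsOfFinOrder w} := by
  refine ⟨RACG.equiv cs hra, RACG.equiv_single cs hra, ?_⟩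
  ext a
  constructor
  · rintro ⟨v, hv, rfl⟩
    obtain ⟨w, h1, -, h3⟩ := RACG.exists_lift cs _ hv
    refine ⟨w, isOfFinOrder_iff_pow_eq_one.2 ⟨2, by norm_num, by rw [pow_two, h1]⟩, ?_⟩
    rw [h3, RACG.equiv_eq_prod]
  · rintro ⟨w, hw, rfl⟩
    refine ⟨RACG.par cs hra w, ?_, ?_⟩
    · intro x hx y hy
      by_cases hxy : x = y
      · subst hxy; exact Commute.refl _
      rcases hra x y hxy with h | h
      · exact RACG.commute_of_two cs x y h
      · exfalso
        apply RACG.finOrder_dih _ ((RACG.dih cs x y h hra).isOfFinOrder hw)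
        rw [RACG.inv_dih]
        have : ∀ a : ZMod 2, a ≠ 0 → a = 1 := by decide
        rw [this _ (Finsupp.mem_support_iff.1 hx), this _ (Finsupp.mem_support_iff.1 hy)]
    · rw [← RACG.equiv_symm_of, MulEquiv.apply_symm_apply]
end

section
/- Let (S,R_Γ) be the commutation relation of a right-angled Coxeter matrix Γ. If C²({s}) = {s} for every s ∈ S, then every 𝔽₂-linear automorphism of [S] stabilizing [S]_c permutes the singletons of S, and hence is induced by an automorphism of Γ. Conversely, if some cell C²({s}) contains an element t ≠ s, then the linear map α_{s,t} fixing {x} for x ≠ s and sending {s} to {s,t} is an automorphism of [S] stabilizing [S]_c which does not preserve cardinality; hence Aut([S],[S]_c) = Aut(Γ) if and only if all cells are singletons. -/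
/-- The commutant of a subset `X` with respect to a binary relation `R`. -/
def Cop {E : Type*} (R : E → E → Prop) (X : Set E) : Set E := {y | ∀ x ∈ X, R y x}

/-- `[S]_c` : the set of elements of `[S] = S →₀ ZMod 2` whose support is commutative. -/
def commc {S : Type*} (R : S → S → Prop) : Set (S →₀ ZMod 2) :=
  {v | ∀ x ∈ v.support, ∀ y ∈ v.support, R x y}

theorem aux_pair {S : Type*} {R : S → S → Prop} {a b : S →₀ ZMod 2}
    (ha : a ∈ commc R) (hb : b ∈ commc R) (hab : a + b ∈ commc R)
    {x y : S} (hx : a x ≠ 0) (hy : b y ≠ 0) : R x y := by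
  by_cases h1 : b x = 0
  · by_cases h2 : a y = 0
    · exact hab x (by simp [h1, hx]) y (by simp [h2, hy])
    · exact ha x (by simpa using hx) y (by simpa using h2)
  · exact hb x (by simpa using h1) y (by simpa using hy)

theorem aux_add {S : Type*} {R : S → S → Prop} (hsymm : Symmetric R) {a b : S →₀ ZMod 2}
    (ha : a ∈ commc R) (hb : b ∈ commc R)
    (h : ∀ x y, a x ≠ 0 → b y ≠ 0 → R x y) : a + b ∈ commc R := by
  have key : ∀ x, x ∈ (a + b).support → a x ≠ 0 ∨ b x ≠ 0 := by
    intro x hx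
    by_contra hc
    push Not at hc
    simp [hc.1, hc.2] at hx
  intro x hx y hy
  rcases key x hx with h1 | h1 <;> rcases key y hy with h2 | h2
  · exact ha x (by simpa using h1) y (by simpa using h2)
  · exact h x y h1 h2
  · exact hsymm (h y x h2 h1)
  · exact hb x (by simpa using h1) y (by simpa using h2)

theorem aux_ne {S : Type*} {x y : S} (h : (Finsupp.single x (1 : ZMod 2)) y ≠ 0) : y = x := by
  by_contra hc
  exact h (Finsupp.single_eq_of_ne hc)

theorem aux_single {S : Type*} {R : S → S → Prop} (hrefl : Reflexive R) (s : S) :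
    Finsupp.single s (1 : ZMod 2) ∈ commc R := by
  intro x hx y hy
  rw [aux_ne (Finsupp.mem_support_iff.1 hx), aux_ne (Finsupp.mem_support_iff.1 hy)]
  exact hrefl s

theorem aux_main {S : Type*} {R : S → S → Prop} (hsymm : Symmetric R) (hrefl : Reflexive R)
    (hc : ∀ s : S, Cop R (Cop R {s}) = {s})
    (φ : (S →₀ ZMod 2) ≃ₗ[ZMod 2] (S →₀ ZMod 2)) (hφ : ∀ v, φ v ∈ commc R ↔ v ∈ commc R)
    (s : S) : ∃ x, φ (Finsupp.single s 1) = Finsupp.single x 1 := by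
  have hu : φ (Finsupp.single s 1) ∈ commc R := (hφ _).2 (aux_single hrefl s)
  have hu0 : φ (Finsupp.single s 1) ≠ 0 := by simp
  obtain ⟨x, hx⟩ := Finsupp.ne_iff.1 hu0
  rw [Finsupp.zero_apply] at hx
  refine ⟨x, ?_⟩
  set w := φ.symm (Finsupp.single x 1) with hw
  have hφw : φ w = Finsupp.single x 1 := by simp [hw]
  have hwc : w ∈ commc R := by
    rw [← hφ, hφw]; exact aux_single hrefl x
  have hw0 : w ≠ 0 := by simp [hw]
  have hsupp : ∀ y, w y ≠ 0 → y = s := by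
    intro y hy
    have : y ∈ Cop R (Cop R {s}) := by
      intro t ht
      have hts : R t s := ht s rfl
      have h1 : Finsupp.single s 1 + Finsupp.single t 1 ∈ commc R := by
        refine aux_add hsymm (aux_single hrefl s) (aux_single hrefl t) ?_
        intro p q hp hq
        rw [aux_ne hp, aux_ne hq]
        exact hsymm hts
      have hv : φ (Finsupp.single t 1) ∈ commc R := (hφ _).2 (aux_single hrefl t)
      have h2 := (hφ _).2 h1
      rw [map_add] at h2
      have h3 : φ (w + Finsupp.single t 1) ∈ commc R := by
        rw [map_add, hφw]
        refine aux_add hsymm (aux_single hrefl x) hv ?_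
        intro p q hp hq
        rw [aux_ne hp]
        exact aux_pair hu hv h2 hx hq
      exact aux_pair hwc (aux_single hrefl t) ((hφ _).1 h3) hy (by simp)
    rw [hc s] at this
    exact this
  obtain ⟨y, hy⟩ := Finsupp.ne_iff.1 hw0
  rw [Finsupp.zero_apply] at hy
  have hys := hsupp y hy
  subst hys
  have hone : ∀ z : ZMod 2, z ≠ 0 → z = 1 := by decide
  have : w = Finsupp.single y 1 := by
    ext z
    by_cases hz : z = y
    · subst hz
      rw [hone _ hy]; simp
    · rw [Finsupp.single_eq_of_ne hz]
      by_contra hc'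
      exact hz (hsupp z hc')
  rw [← this, hφw]

theorem stmt_18 {S : Type*} (R : S → S → Prop) (hsymm : Symmetric R) (hrefl : Reflexive R) :
    (∀ φ : (S →₀ ZMod 2) ≃ₗ[ZMod 2] (S →₀ ZMod 2), ⇑φ '' commc R = commc R →
      ∃ σ : Equiv.Perm S, (∀ x y : S, R x y ↔ R (σ x) (σ y)) ∧
        ∀ s : S, φ (Finsupp.single s 1) = Finsupp.single (σ s) 1) ↔
    (∀ s : S, Cop R (Cop R {s}) = {s}) := by
  have two : ∀ z : ZMod 2, z + z = 0 := by decide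
  constructor
  · intro H s
    by_contra hne
    have hs : s ∈ Cop R (Cop R {s}) := fun y hy => hsymm (hy s rfl)
    have : ∃ t ∈ Cop R (Cop R {s}), t ≠ s := by
      by_contra hcon
      push Not at hcon
      exact hne (Set.eq_singleton_iff_unique_mem.2 ⟨hs, hcon⟩)
    obtain ⟨t, ht, hts⟩ := this
    let f : (S →₀ ZMod 2) →ₗ[ZMod 2] (S →₀ ZMod 2) :=
      LinearMap.id + (Finsupp.lsingle t).comp (Finsupp.lapply s)
    have hf : ∀ v, f v = v + Finsupp.single t (v s) := fun v => rfl
    have hff : ∀ v, f (f v) = v := by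
      intro v
      rw [hf, hf]
      have : (v + Finsupp.single t (v s)) s = v s := by
        rw [Finsupp.add_apply, Finsupp.single_eq_of_ne hts.symm, add_zero]
      rw [this, add_assoc, ← Finsupp.single_add, two]
      simp
    have hfc : ∀ v ∈ commc R, f v ∈ commc R := by
      intro v hv
      rw [hf]
      have hone : ∀ z : ZMod 2, z = 0 ∨ z = 1 := by decide
      rcases hone (v s) with h | h
      · simpa [h] using hv
      · rw [h]
        refine aux_add hsymm hv (aux_single hrefl t) ?_
        intro p q hp hq
        rw [aux_ne hq]
        refine hsymm (ht p ?_)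
        rintro _ rfl
        exact hv p (by simpa using hp) _ (by simp [h])
    let φ : (S →₀ ZMod 2) ≃ₗ[ZMod 2] (S →₀ ZMod 2) :=
      LinearEquiv.ofLinear f f (LinearMap.ext hff) (LinearMap.ext hff)
    have hφ : ∀ v, φ v = f v := fun v => rfl
    obtain ⟨σ, -, hσ⟩ := H φ (by
      ext v
      constructor
      · rintro ⟨w, hw, rfl⟩
        exact hfc w hw
      · intro hv
        exact ⟨f v, hfc v hv, hff v⟩)
    have h := hσ s
    rw [hφ, hf] at h
    have h1 : s = σ s := by
      apply aux_ne
      rw [← h, Finsupp.add_apply, Finsupp.single_eq_of_ne hts.symm]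
      simp
    have h2 : t = σ s := by
      apply aux_ne
      rw [← h, Finsupp.add_apply, Finsupp.single_eq_of_ne hts]
      simp
    exact hts (h2.trans h1.symm)
  · intro hc φ hφ
    have h1 : ∀ v, φ v ∈ commc R ↔ v ∈ commc R := by
      intro v
      rw [← hφ]
      conv_rhs => rw [← φ.injective.mem_set_image, hφ]
    have h2 : ∀ v, φ.symm v ∈ commc R ↔ v ∈ commc R := by
      intro v
      rw [← h1, φ.apply_symm_apply]
    choose a ha using aux_main hsymm hrefl hc φ h1
    choose b hb using aux_main hsymm hrefl hc φ.symm h2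
    have inj : ∀ x y : S, Finsupp.single x (1 : ZMod 2) = Finsupp.single y 1 → x = y := by
      intro x y h
      apply aux_ne
      rw [← h]; simp
    refine ⟨⟨a, b, ?_, ?_⟩, ?_, ha⟩
    · intro x
      apply inj
      rw [← hb, ← ha, φ.symm_apply_apply]
    · intro x
      apply inj
      rw [← ha, ← hb, φ.apply_symm_apply]
    · have key : ∀ x y : S, R x y ↔
          Finsupp.single x (1 : ZMod 2) + Finsupp.single y 1 ∈ commc R := by
        intro x y
        constructor
        · intro h
          refine aux_add hsymm (aux_single hrefl x) (aux_single hrefl y) ?_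
          intro p q hp hq
          rw [aux_ne hp, aux_ne hq]
          exact h
        · intro h
          exact aux_pair (aux_single hrefl x) (aux_single hrefl y) h (by simp) (by simp)
      intro x y
      change R x y ↔ R (a x) (a y)
      rw [key, key, ← ha, ← ha, ← map_add, h1]
end
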